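/- Let n ≥ r ≥ 2 be integers and set m = n − r. Let hX : ℤ × ℤ → ℝ satisfy hX(p,q) = 0 whenever p < 0, p > n, q < 0, or q > n, let hY : ℤ × ℤ → ℝ satisfy hY(p,q) = 0 whenever p < 0, p > m, q < 0, or q > m, and let bX, bY : ℤ → ℝ. Define SX(k) = ∑_{p=0}^{n} hX(p, k − p), ΔX(k) = SX(k) + SX(2n − k) − 2·bX(k), SY(k) = ∑_{p=0}^{m} hY(p, k − p), and ΔY(k) = SY(k) + SY(2m − k) − 2·bY(k), and assume ΔX(k) ≥ 0 and ΔY(k) ≥ 0 for all k ∈ ℤ. Define h̃(p,q) = hX(p,q) + ∑_{i=1}^{r-1} hY(p − i, q − i), b̃(k) = bX(k) + ∑_{i=1}^{r-1} bY(k − 2i), S̃(k) = ∑_{p=0}^{n} h̃(p, k − p), and Δ̃(k) = S̃(k) + S̃(2n − k) − 2·b̃(k). Then Δ̃(k) = 0 for all k ∈ ℤ if and only if ΔX(k) = 0 for all k ∈ ℤ and ΔY(k) = 0 for all k ∈ ℤ. -/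

import Mathlib

/-!
The blow-up formulas add to the invariants of `X` one copy of those of `Y` for each `1 ≤ i < r`,
with bidegrees shifted by `(i, i)`. On the dual side the shift by `i` in dimension `n` becomes the
shift by `r - i` in dimension `m = n - r`, because `2n - k - 2(r - i) = 2m - (k - 2i)`. Summing over
`i`, the degrees of the blow-up are `Δ̃(k) = ΔX(k) + ∑ᵢ ΔY(k - 2i)`, a sum of nonnegative terms in
which, since `r ≥ 2`, every `ΔY(k)` occurs.
-/

open Finset

section Sums

variable {A : Type*} [AddCommMonoid A]

theorem sum_range_sub_eq_sum_range {m n i : ℕ} (hmn : m + i ≤ n) {f : ℤ → A}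
    (hf : ∀ p : ℤ, p < 0 ∨ (m : ℤ) < p → f p = 0) :
    ∑ p ∈ range (n + 1), f (p - i) = ∑ p ∈ range (m + 1), f p := by
  symm
  refine sum_of_injOn (· + i) (add_left_injective i).injOn ?_ ?_ ?_
  · intro p hp
    simp only [coe_range, Set.mem_Iio] at hp ⊢
    omega
  · intro p _ hp
    refine hf _ (by_contra fun hp_mem ↦ hp ⟨p - i, ?_, ?_⟩)
    · simp only [coe_range, Set.mem_Iio]
      omega
    · dsimp only
      omega
  · intro p _
    simp

theorem sum_Icc_one_sub_one_reflect (r : ℕ) (f : ℕ → A) :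
    ∑ i ∈ Icc 1 (r - 1), f (r - i) = ∑ i ∈ Icc 1 (r - 1), f i := by
  rcases r with _ | r
  · simp
  · simpa [Ico_add_one_right_eq_Icc] using sum_Ico_reflect f 1 (Nat.le_succ (r + 1))

theorem forall_add_sum_sub_eq_zero_iff {G ι : Type*} [AddGroup G] [PartialOrder A]
    [IsOrderedAddMonoid A] {f g : G → A} (hf : ∀ k, 0 ≤ f k) (hg : ∀ k, 0 ≤ g k)
    {s : Finset ι} (hs : s.Nonempty) (t : ι → G) :
    (∀ k, f k + ∑ i ∈ s, g (k - t i) = 0) ↔ (∀ k, f k = 0) ∧ ∀ k, g k = 0 := by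
  have summands_eq_zero_iff (k : G) :
      f k + ∑ i ∈ s, g (k - t i) = 0 ↔ f k = 0 ∧ ∀ i ∈ s, g (k - t i) = 0 := by
    rw [add_eq_zero_iff_of_nonneg (hf k) (sum_nonneg fun i _ ↦ hg _),
      sum_eq_zero_iff_of_nonneg fun i _ ↦ hg _]
  simp only [summands_eq_zero_iff, forall_and]
  refine and_congr_right fun _ ↦ ⟨fun h k ↦ ?_, fun h k i _ ↦ h _⟩
  obtain ⟨i, hi⟩ := hs
  simpa using h (k + t i) i hi

end Sums

/-- The sum `∑_{p+q=k} h(p,q)` of the numbers `h` of total degree `k` on a manifold of complex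
dimension `d`, indexed by `0 ≤ p ≤ d`. -/
def totalDegreeSum {A : Type*} [AddCommMonoid A] (d : ℕ) (h : ℤ × ℤ → A) (k : ℤ) : A :=
  ∑ p ∈ range (d + 1), h (p, k - p)

/-- The Angella–Tomassini non-Kählerness degree `Δ^k` of a manifold of complex dimension `d` with
Bott–Chern numbers `h` and Betti numbers `b`. -/
def nonKahlernessDegree {A : Type*} [AddCommGroup A] (d : ℕ) (h : ℤ × ℤ → A) (b : ℤ → A)
    (k : ℤ) : A :=
  totalDegreeSum d h k + totalDegreeSum d h (2 * d - k) - 2 • b k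

/-- The Bott–Chern numbers, by the blow-up formula, of the blow-up along a submanifold of
codimension `r`, where `hX` and `hY` are those of the ambient manifold and of the submanifold. -/
def blowUpBottChern {A : Type*} [AddCommMonoid A] (r : ℕ) (hX hY : ℤ × ℤ → A) (x : ℤ × ℤ) : A :=
  hX x + ∑ i ∈ Icc 1 (r - 1), hY (x.1 - (i : ℤ), x.2 - (i : ℤ))

/-- The Betti numbers, by the blow-up formula, of the blow-up along a submanifold of complex
codimension `r`, where `bX` and `bY` are those of the ambient manifold and of the submanifold. -/
def blowUpBetti {A : Type*} [AddCommMonoid A] (r : ℕ) (bX bY : ℤ → A) (k : ℤ) : A :=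
  bX k + ∑ i ∈ Icc 1 (r - 1), bY (k - 2 * (i : ℤ))

theorem eq_nonKahlernessDegree {R : Type*} [Ring R] {d : ℕ} {h : ℤ × ℤ → R} {b S Δ : ℤ → R}
    (hS : ∀ k, S k = ∑ p ∈ range (d + 1), h (p, k - p))
    (hΔ : ∀ k, Δ k = S k + S (2 * d - k) - 2 * b k) : Δ = nonKahlernessDegree d h b := by
  funext k
  simp only [hΔ, hS, nonKahlernessDegree, totalDegreeSum, nsmul_eq_mul, Nat.cast_ofNat]

section BlowUp

variable {A : Type*} {m n r : ℕ} {hY : ℤ × ℤ → A}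

theorem totalDegreeSum_blowUpBottChern [AddCommMonoid A] (hmn : m + r = n) (hX : ℤ × ℤ → A)
    (hY_eq_zero : ∀ p q : ℤ, p < 0 ∨ (m : ℤ) < p → hY (p, q) = 0) (k : ℤ) :
    totalDegreeSum n (blowUpBottChern r hX hY) k =
      totalDegreeSum n hX k + ∑ i ∈ Icc 1 (r - 1), totalDegreeSum m hY (k - 2 * i) := by
  simp only [totalDegreeSum, blowUpBottChern, sum_add_distrib]
  rw [sum_comm]
  congr 1
  refine sum_congr rfl fun i hi ↦ ?_
  have hin : m + i ≤ n := by
    rw [mem_Icc] at hi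
    omega
  rw [← sum_range_sub_eq_sum_range hin (f := fun p ↦ hY (p, k - 2 * i - p))
    fun p hp ↦ hY_eq_zero p _ hp]
  refine sum_congr rfl fun p _ ↦ ?_
  congr 2
  ring

theorem sum_dual_shift_eq [AddCommMonoid A] (hmn : m + r = n) (f : ℤ → A) (k : ℤ) :
    ∑ i ∈ Icc 1 (r - 1), f (2 * n - k - 2 * i) =
      ∑ i ∈ Icc 1 (r - 1), f (2 * m - (k - 2 * i)) := by
  rw [← sum_Icc_one_sub_one_reflect]
  refine sum_congr rfl fun i hi ↦ congrArg f ?_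
  rw [mem_Icc] at hi
  omega

theorem nonKahlernessDegree_blowUp [AddCommGroup A] (hmn : m + r = n) (hX : ℤ × ℤ → A)
    (hY_eq_zero : ∀ p q : ℤ, p < 0 ∨ (m : ℤ) < p → hY (p, q) = 0) (bX bY : ℤ → A) (k : ℤ) :
    nonKahlernessDegree n (blowUpBottChern r hX hY) (blowUpBetti r bX bY) k =
      nonKahlernessDegree n hX bX k +
        ∑ i ∈ Icc 1 (r - 1), nonKahlernessDegree m hY bY (k - 2 * i) := by
  simp only [nonKahlernessDegree, blowUpBetti, totalDegreeSum_blowUpBottChern hmn hX hY_eq_zero,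
    sum_dual_shift_eq hmn, sum_sub_distrib, sum_add_distrib, ← smul_sum]
  abel

theorem blow_up_lemma_numerical_general [AddCommGroup A] [PartialOrder A] [IsOrderedAddMonoid A]
    (hr : 2 ≤ r) (hmn : m + r = n) {hX : ℤ × ℤ → A} {bX bY : ℤ → A}
    (hY_eq_zero : ∀ p q : ℤ, p < 0 ∨ (m : ℤ) < p → hY (p, q) = 0)
    (hX_nonneg : ∀ k, 0 ≤ nonKahlernessDegree n hX bX k)
    (hY_nonneg : ∀ k, 0 ≤ nonKahlernessDegree m hY bY k) :
    (∀ k, nonKahlernessDegree n (blowUpBottChern r hX hY) (blowUpBetti r bX bY) k = 0) ↔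
      (∀ k, nonKahlernessDegree n hX bX k = 0) ∧ ∀ k, nonKahlernessDegree m hY bY k = 0 := by
  have shifts_nonempty : (Icc 1 (r - 1)).Nonempty := nonempty_Icc.2 (by omega)
  simp only [nonKahlernessDegree_blowUp hmn hX hY_eq_zero]
  exact forall_add_sum_sub_eq_zero_iff hX_nonneg hY_nonneg shifts_nonempty _

end BlowUp

theorem blow_up_lemma_numerical
    (n r : ℕ) (hr : 2 ≤ r) (hrn : r ≤ n) (m : ℕ) (hm : m = n - r)
    (hX : ℤ × ℤ → ℝ)
    (hXvan : ∀ p q : ℤ, (p < 0 ∨ p > (n : ℤ) ∨ q < 0 ∨ q > (n : ℤ)) → hX (p, q) = 0)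
    (hY : ℤ × ℤ → ℝ)
    (hYvan : ∀ p q : ℤ, (p < 0 ∨ p > (m : ℤ) ∨ q < 0 ∨ q > (m : ℤ)) → hY (p, q) = 0)
    (bX bY : ℤ → ℝ)
    (SX : ℤ → ℝ) (hSX : ∀ k : ℤ, SX k = ∑ p ∈ Finset.range (n + 1), hX ((p : ℤ), k - (p : ℤ)))
    (ΔX : ℤ → ℝ) (hΔX : ∀ k : ℤ, ΔX k = SX k + SX (2 * (n : ℤ) - k) - 2 * bX k)
    (SY : ℤ → ℝ) (hSY : ∀ k : ℤ, SY k = ∑ p ∈ Finset.range (m + 1), hY ((p : ℤ), k - (p : ℤ)))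
    (ΔY : ℤ → ℝ) (hΔY : ∀ k : ℤ, ΔY k = SY k + SY (2 * (m : ℤ) - k) - 2 * bY k)
    (hΔXnonneg : ∀ k : ℤ, 0 ≤ ΔX k) (hΔYnonneg : ∀ k : ℤ, 0 ≤ ΔY k)
    (ht : ℤ × ℤ → ℝ)
    (hht : ∀ p q : ℤ,
      ht (p, q) = hX (p, q) + ∑ i ∈ Finset.Icc 1 (r - 1), hY (p - (i : ℤ), q - (i : ℤ)))
    (bt : ℤ → ℝ)
    (hbt : ∀ k : ℤ, bt k = bX k + ∑ i ∈ Finset.Icc 1 (r - 1), bY (k - 2 * (i : ℤ)))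
    (St : ℤ → ℝ) (hSt : ∀ k : ℤ, St k = ∑ p ∈ Finset.range (n + 1), ht ((p : ℤ), k - (p : ℤ)))
    (Δt : ℤ → ℝ) (hΔt : ∀ k : ℤ, Δt k = St k + St (2 * (n : ℤ) - k) - 2 * bt k) :
    (∀ k : ℤ, Δt k = 0) ↔ ((∀ k : ℤ, ΔX k = 0) ∧ (∀ k : ℤ, ΔY k = 0)) := by
  obtain rfl : ht = blowUpBottChern r hX hY := funext fun x ↦ hht x.1 x.2
  obtain rfl : bt = blowUpBetti r bX bY := funext hbt
  obtain rfl := eq_nonKahlernessDegree hSX hΔX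
  obtain rfl := eq_nonKahlernessDegree hSY hΔY
  obtain rfl := eq_nonKahlernessDegree hSt hΔt
  exact blow_up_lemma_numerical_general hr (by omega)
    (fun p q hp ↦ hYvan p q (by omega)) hΔXnonneg hΔYnonneg
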